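/- Let F be a finite field with q elements, let d ≥ 2 and 0 < k < d be integers, and let v_1, …, v_n be vectors spanning F^r, representing a matroid M on {1,…,n} with rank function r(A) = dim_F span{v_i : i ∈ A} (so r(M) = r). Then the cardinality of the space of (k,d)-photos of M satisfies |X_{k,d}(M)| = ( [d−1 choose k−1]_q )^{n−r} · ( q^k · [d−1 choose k]_q )^{r} · T_M( [d]_q / [d−k]_q , [d]_q / [k]_q ), as an identity of rational numbers. -/

import Mathlib

/-- The space of `(k,d)`-photos of the matroid represented by
`v : Fin n → F^r`: pairs `(φ, W)` where `φ : F^r → F^d` is linear, each `W i`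
is a `k`-dimensional subspace of `F^d`, and `φ (v i) ∈ W i` for all `i`. -/
def PhotoSpace (F : Type*) [Field F] (r d k n : ℕ) (v : Fin n → (Fin r → F)) :=
  {p : ((Fin r → F) →ₗ[F] (Fin d → F)) × (Fin n → Submodule F (Fin d → F)) //
    (∀ i, Module.finrank F (p.2 i) = k) ∧ ∀ i, p.1 (v i) ∈ p.2 i}

/-- The Gaussian binomial coefficient `[j choose k]_q` as a rational number. -/
def gaussBinom (q : ℚ) (j k : ℕ) : ℚ :=
  ∏ i ∈ Finset.range k, (q ^ (j - i) - 1) / (q ^ (k - i) - 1)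

/-- The `q`-integer `[j]_q = (q^j - 1)/(q - 1)`. -/
def qInt (q : ℚ) (j : ℕ) : ℚ := (q ^ j - 1) / (q - 1)

/-- The rank function of the matroid represented by `v`. -/
noncomputable def repRank (F : Type*) [Field F] {r n : ℕ}
    (v : Fin n → (Fin r → F)) (A : Set (Fin n)) : ℕ :=
  Module.finrank F (Submodule.span F (v '' A))

/-- The corank-nullity (Tutte polynomial) evaluation
`T_M(x,y) = Σ_{A ⊆ E} (x-1)^{r(E)-r(A)} (y-1)^{|A|-r(A)}`. -/
noncomputable def tutteEval (F : Type*) [Field F] {r n : ℕ}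
    (v : Fin n → (Fin r → F)) (x y : ℚ) : ℚ :=
  ∑ A : Finset (Fin n),
    (x - 1) ^ (repRank F v Set.univ - repRank F v (A : Set (Fin n))) *
      (y - 1) ^ (A.card - repRank F v (A : Set (Fin n)))

open Module

theorem ph_grass_sigma {F V : Type*} [Field F] [Fintype F] [AddCommGroup V] [Module F V] [Finite V]
    (k : ℕ) :
    Nat.card {s : Fin k → V // LinearIndependent F s} =
      Nat.card (Σ W : {W : Submodule F V // finrank F W = k},
        {s : Fin k → W.1 // LinearIndependent F s}) := by
  symm
  refine Nat.card_congr (Equiv.ofBijective (fun x => ⟨fun i => (x.2.1 i : V),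
    x.2.2.map' x.1.1.subtype (Submodule.ker_subtype _)⟩) ⟨?_, ?_⟩)
  · have key : ∀ (W : Submodule F V) (hW : finrank F W = k) (s : Fin k → W),
        LinearIndependent F s → W = Submodule.span F (Set.range fun i => (s i : V)) := by
      intro W hW s hs
      symm
      apply Submodule.eq_of_le_of_finrank_eq
      · rw [Submodule.span_le]
        rintro _ ⟨i, rfl⟩
        exact (s i).2
      · rw [hW]
        have := finrank_span_eq_card (hs.map' W.subtype (Submodule.ker_subtype _))
        rw [Fintype.card_fin] at this
        exact this
    rintro ⟨⟨W, hW⟩, ⟨s, hs⟩⟩ ⟨⟨W', hW'⟩, ⟨s', hs'⟩⟩ h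
    have h1 : (fun i => (s i : V)) = fun i => (s' i : V) := congrArg Subtype.val h
    have h2 : W = W' := by rw [key W hW s hs, key W' hW' s' hs', h1]
    subst h2
    have h3 : s = s' := by
      funext i
      exact Subtype.ext (congrFun h1 i)
    subst h3
    rfl
  · rintro ⟨s, hs⟩
    refine ⟨⟨⟨Submodule.span F (Set.range s), ?_⟩,
      ⟨fun i => ⟨s i, Submodule.subset_span ⟨i, rfl⟩⟩, ?_⟩⟩, rfl⟩
    · simpa using finrank_span_eq_card hs
    · exact LinearIndependent.of_comp (Submodule.subtype _) hs

theorem ph_card_grass {F V : Type*} [Field F] [Fintype F] [AddCommGroup V] [Module F V] [Finite V]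
    (k : ℕ) (hk : k ≤ finrank F V) :
    (Nat.card {W : Submodule F V // finrank F W = k} : ℚ) =
      gaussBinom (Fintype.card F : ℚ) (finrank F V) k := by
  have hq : 1 < Fintype.card F := Fintype.one_lt_card
  have hq' : (1 : ℚ) < Fintype.card F := by exact_mod_cast hq
  have h := ph_grass_sigma (F := F) (V := V) k
  have := Fintype.ofFinite {W : Submodule F V // finrank F W = k}
  rw [card_linearIndependent hk, Nat.card_sigma] at h
  have h2 : ∀ W : {W : Submodule F V // finrank F W = k},
      Nat.card {s : Fin k → W.1 // LinearIndependent F s} =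
        ∏ i : Fin k, (Fintype.card F ^ k - Fintype.card F ^ i.val) := by
    intro W
    rw [card_linearIndependent W.2.ge, W.2]
  have cast : ∀ m, k ≤ m → ((∏ i : Fin k, (Fintype.card F ^ m - Fintype.card F ^ i.val) : ℕ) : ℚ)
      = ∏ i ∈ Finset.range k, ((Fintype.card F : ℚ) ^ i * ((Fintype.card F : ℚ) ^ (m - i) - 1)) := by
    intro m hm
    rw [Finset.prod_range]
    push_cast
    refine Finset.prod_congr rfl fun i _ => ?_
    have hi : i.val ≤ m := i.2.le.trans hm
    rw [Nat.cast_sub (Nat.pow_le_pow_right hq.le hi), mul_sub, ← pow_add, Nat.add_sub_cancel' hi]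
    simp
  have h3 := congrArg (fun x : ℕ => (x : ℚ)) h
  simp only [h2, Finset.sum_const, smul_eq_mul, Finset.card_univ] at h3
  rw [Nat.cast_mul, cast _ hk, cast _ le_rfl, Finset.prod_mul_distrib, Finset.prod_mul_distrib] at h3
  have hA : ∏ i ∈ Finset.range k, (Fintype.card F : ℚ) ^ i ≠ 0 :=
    Finset.prod_ne_zero_iff.2 fun i _ => by positivity
  have hB : ∏ i ∈ Finset.range k, ((Fintype.card F : ℚ) ^ (k - i) - 1) ≠ 0 :=
    Finset.prod_ne_zero_iff.2 fun i hi => by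
      have := one_lt_pow₀ hq' (n := k - i) (by have := Finset.mem_range.1 hi; omega)
      linarith
  rw [gaussBinom, Finset.prod_div_distrib, Nat.card_eq_fintype_card, eq_div_iff hB]
  apply mul_left_cancel₀ hA
  rw [h3]; ring

theorem ph_finrank_comap {F V : Type*} [Field F] [AddCommGroup V] [Module F V] [FiniteDimensional F V]
    (p : Submodule F V) (U : Submodule F (V ⧸ p)) :
    finrank F (U.comap p.mkQ) = finrank F U + finrank F p := by
  have h := LinearMap.finrank_range_add_finrank_ker (p.mkQ.restrict (p := U.comap p.mkQ) (q := U)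
    (fun x hx => hx))
  rw [← h]
  congr 1
  · have : (p.mkQ.restrict (p := U.comap p.mkQ) (q := U) (fun x hx => hx)).range = ⊤ := by
      rw [LinearMap.range_eq_top]
      rintro ⟨u, hu⟩
      obtain ⟨x, rfl⟩ := p.mkQ_surjective u
      exact ⟨⟨x, hu⟩, rfl⟩
    rw [this, finrank_top]
  · rw [LinearMap.ker_restrict]
    have hle : p ≤ U.comap p.mkQ := by
      intro x hx
      have : p.mkQ x = 0 := by simpa using hx
      simp [Submodule.mem_comap, this] 
    have := (Submodule.comapSubtypeEquivOfLe hle).finrank_eq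
    rw [← this, Submodule.ker_mkQ]

theorem ph_card_grass_mem {F V : Type*} [Field F] [Fintype F] [AddCommGroup V] [Module F V] [Finite V]
    (k : ℕ) (hk : 0 < k) (hkd : k ≤ finrank F V) (w : V) (hw : w ≠ 0) :
    (Nat.card {W : Submodule F V // finrank F W = k ∧ w ∈ W} : ℚ) =
      gaussBinom (Fintype.card F : ℚ) (finrank F V - 1) (k - 1) := by
  have h1 := finrank_span_singleton (K := F) hw
  have h2 := Submodule.finrank_quotient_add_finrank (F ∙ w)
  have : finrank F V - 1 = finrank F (V ⧸ (F ∙ w)) := by omega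
  have : Finite (V ⧸ (F ∙ w)) := Finite.of_surjective _ (Submodule.mkQ_surjective _)
  rw [‹finrank F V - 1 = _›, ← ph_card_grass _ (by omega)]
  congr 1
  symm
  refine Nat.card_congr (Equiv.ofBijective (fun U => ⟨U.1.comap (F ∙ w).mkQ, ?_, ?_⟩) ⟨?_, ?_⟩)
  · rw [ph_finrank_comap, U.2, h1]; omega
  · have : (F ∙ w).mkQ w = 0 := by simp [Submodule.mem_span_singleton_self]
    simp [Submodule.mem_comap, this]
  · rintro ⟨U, hU⟩ ⟨U', hU'⟩ h
    have := congrArg Subtype.val h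
    exact Subtype.ext (Submodule.comap_injective_of_surjective (Submodule.mkQ_surjective _) this)
  · rintro ⟨W, hW, hwW⟩
    have e : (W.map (F ∙ w).mkQ).comap (F ∙ w).mkQ = W := by
      rw [Submodule.comap_map_mkQ]
      exact sup_eq_right.2 ((Submodule.span_singleton_le_iff_mem _ _).2 hwW)
    refine ⟨⟨W.map (F ∙ w).mkQ, ?_⟩, Subtype.ext e⟩
    have := ph_finrank_comap (F ∙ w) (W.map (F ∙ w).mkQ)
    rw [e, hW, h1] at this
    omega

theorem ph_card_hom {F V U : Type*} [Field F] [Fintype F] [AddCommGroup V] [Module F V] [Finite V]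
    [AddCommGroup U] [Module F U] [Finite U] (S : Submodule F V) :
    Nat.card {f : V →ₗ[F] U // S ≤ LinearMap.ker f} =
      (Fintype.card F ^ finrank F U) ^ (finrank F V - finrank F S) := by
  have h2 := Submodule.finrank_quotient_add_finrank S
  have e : {f : V →ₗ[F] U // S ≤ LinearMap.ker f} ≃ ((V ⧸ S) →ₗ[F] U) :=
    { toFun := fun f => S.liftQ f.1 f.2
      invFun := fun g => ⟨g.comp S.mkQ, fun x hx => by
        have : S.mkQ x = 0 := by simpa using hx
        rw [LinearMap.mem_ker, LinearMap.comp_apply, this, map_zero]⟩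
      left_inv := fun f => Subtype.ext (S.liftQ_mkQ f.1 f.2)
      right_inv := fun g => by
        apply Submodule.linearMap_qext
        exact S.liftQ_mkQ _ _ }
  rw [Nat.card_congr e, natCard_eq_pow_finrank (K := F), finrank_linearMap, ← pow_mul,
    Nat.card_eq_fintype_card, mul_comm]
  congr 2
  omega

theorem ph_gauss_ratio (q : ℚ) (hq : 1 < q) (d k : ℕ) (hk : 0 < k) (hkd : k < d) :
    gaussBinom q (d - 1) k = gaussBinom q (d - 1) (k - 1) * ((q ^ (d - k) - 1) / (q ^ k - 1)) := by
  obtain ⟨k, rfl⟩ := Nat.exists_eq_succ_of_ne_zero hk.ne'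
  simp only [gaussBinom, Finset.prod_div_distrib, Nat.succ_eq_add_one, Nat.add_sub_cancel]
  rw [Finset.prod_range_succ, Finset.prod_range_succ' (fun i => q ^ (k + 1 - i) - 1)]
  simp only [Nat.add_sub_add_right, Nat.sub_zero]
  rw [mul_div_mul_comm, Nat.sub_sub, add_comm 1 k]

theorem ph_gauss_top (q : ℚ) (hq : 1 < q) (d k : ℕ) (hk : 0 < k) (hkd : k < d) :
    gaussBinom q d k = gaussBinom q (d - 1) (k - 1) * ((q ^ d - 1) / (q ^ k - 1)) := by
  obtain ⟨k, rfl⟩ := Nat.exists_eq_succ_of_ne_zero hk.ne'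
  obtain ⟨d, rfl⟩ := Nat.exists_eq_succ_of_ne_zero (show d ≠ 0 by omega)
  simp only [gaussBinom, Nat.succ_eq_add_one, Nat.add_sub_cancel]
  rw [Finset.prod_range_succ']
  simp only [Nat.add_sub_add_right, Nat.sub_zero]

theorem ph_gauss_pos (q : ℚ) (hq : 1 < q) (d k : ℕ) (hkd : k ≤ d) : 0 < gaussBinom q d k := by
  refine Finset.prod_pos fun i hi => ?_
  have hi := Finset.mem_range.1 hi
  have h1 := one_lt_pow₀ hq (n := k - i) (by omega)
  have h2 := one_lt_pow₀ hq (n := d - i) (by omega)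
  exact div_pos (by linarith) (by linarith)

theorem ph_algebra (q : ℚ) (hq : 1 < q) (d k : ℕ) (hk : 0 < k) (hkd : k < d) :
    (qInt q d / qInt q k - 1) * gaussBinom q (d - 1) (k - 1) = q ^ k * gaussBinom q (d - 1) k ∧
    (qInt q d / qInt q (d - k) - 1) * (qInt q d / qInt q k - 1) = q ^ d ∧
    gaussBinom q d k = q ^ k * gaussBinom q (d - 1) k + gaussBinom q (d - 1) (k - 1) ∧
    0 < qInt q d / qInt q k - 1 := by
  rw [ph_gauss_ratio q hq d k hk hkd, ph_gauss_top q hq d k hk hkd]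
  have e : q ^ d = q ^ k * q ^ (d - k) := by rw [← pow_add]; congr 1; omega
  have h1 := one_lt_pow₀ hq (n := k) (by omega)
  have h2 := one_lt_pow₀ hq (n := d - k) (by omega)
  simp only [qInt]
  rw [e]
  generalize q ^ k = a at *
  generalize q ^ (d - k) = b at *
  have h3 : q - 1 ≠ 0 := by linarith
  have h4 : a - 1 ≠ 0 := by linarith
  have h5 : b - 1 ≠ 0 := by linarith
  have hy : (a * b - 1) / (q - 1) / ((a - 1) / (q - 1)) - 1 = a * (b - 1) / (a - 1) := by
    field_simp; ring
  have hx : (a * b - 1) / (q - 1) / ((b - 1) / (q - 1)) - 1 = b * (a - 1) / (b - 1) := by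
    field_simp; ring
  rw [hx, hy]
  refine ⟨by field_simp, by field_simp, by field_simp; ring, ?_⟩
  exact div_pos (mul_pos (by linarith) (by linarith)) (by linarith)

theorem ph_main (F : Type*) [Field F] [Fintype F] (r d k n : ℕ)
    (hk : 0 < k) (hkd : k < d) (v : Fin n → (Fin r → F)) :
    (Nat.card (PhotoSpace F r d k n v) : ℚ) =
      ∑ A : Finset (Fin n), ((Fintype.card F : ℚ) ^ k * gaussBinom (Fintype.card F : ℚ) (d - 1) k) ^ A.card
        * gaussBinom (Fintype.card F : ℚ) (d - 1) (k - 1) ^ (n - A.card)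
        * ((Fintype.card F : ℚ) ^ d) ^ (r - repRank F v (A : Set (Fin n))) := by
  classical
  have hq : (1 : ℚ) < Fintype.card F := by exact_mod_cast Fintype.one_lt_card
  obtain ⟨-, -, h3, -⟩ := ph_algebra _ hq d k hk hkd
  set a := (Fintype.card F : ℚ) ^ k * gaussBinom (Fintype.card F : ℚ) (d - 1) k
  set b := gaussBinom (Fintype.card F : ℚ) (d - 1) (k - 1)
  have e : PhotoSpace F r d k n v ≃ Σ φ : (Fin r → F) →ₗ[F] (Fin d → F),
      ∀ i, {W : Submodule F (Fin d → F) // finrank F W = k ∧ φ (v i) ∈ W} :=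
    { toFun := fun p => ⟨p.1.1, fun i => ⟨p.1.2 i, p.2.1 i, p.2.2 i⟩⟩
      invFun := fun x => ⟨(x.1, fun i => (x.2 i).1), fun i => (x.2 i).2.1, fun i => (x.2 i).2.2⟩
      left_inv := fun _ => rfl
      right_inv := fun _ => rfl }
  have : Finite ((Fin r → F) →ₗ[F] (Fin d → F)) := Module.finite_of_finite F
  have := Fintype.ofFinite ((Fin r → F) →ₗ[F] (Fin d → F))
  have hN : ∀ w : Fin d → F,
      (Nat.card {W : Submodule F (Fin d → F) // finrank F W = k ∧ w ∈ W} : ℚ) =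
        a * (if w = 0 then 1 else 0) + b := by
    intro w
    split_ifs with hw
    · subst hw
      have := ph_card_grass (F := F) (V := Fin d → F) k (by simpa using hkd.le)
      rw [finrank_fin_fun] at this
      simp only [zero_mem, and_true]
      rw [this, h3, mul_one]
    · have := ph_card_grass_mem (F := F) (V := Fin d → F) k hk (by simpa using hkd.le) w hw
      rw [finrank_fin_fun] at this
      rw [this, mul_zero, zero_add]
  rw [Nat.card_congr e, Nat.card_sigma]
  simp only [Nat.card_pi]
  push_cast
  simp only [hN, Finset.prod_add, Finset.powerset_univ, Finset.prod_mul_distrib,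
    Finset.prod_const]
  rw [Finset.sum_comm]
  refine Finset.sum_congr rfl fun A _ => ?_
  rw [← Finset.sum_mul, ← Finset.mul_sum]
  have hc : (Finset.univ \ A).card = n - A.card := by
    rw [Finset.card_sdiff_of_subset (Finset.subset_univ _)]; simp
  have hs : ∑ φ : (Fin r → F) →ₗ[F] (Fin d → F), ∏ i ∈ A, (if φ (v i) = 0 then (1 : ℚ) else 0)
      = ((Fintype.card F : ℚ) ^ d) ^ (r - repRank F v (A : Set (Fin n))) := by
    have := ph_card_hom (F := F) (U := Fin d → F) (Submodule.span F (v '' (A : Set (Fin n))))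
    rw [finrank_fin_fun, finrank_fin_fun] at this
    rw [repRank]
    have h' := congrArg (fun x : ℕ => (x : ℚ)) this
    push_cast at h'
    rw [← h', Nat.card_eq_fintype_card, Fintype.card_subtype, ← Finset.sum_boole]
    refine Finset.sum_congr rfl fun φ _ => ?_
    rw [Finset.prod_ite_zero]
    simp only [Finset.prod_const_one]
    refine if_congr ?_ rfl rfl
    rw [Submodule.span_le]
    constructor
    · rintro h _ ⟨i, hi, rfl⟩
      exact h i hi
    · intro h i hi
      exact h ⟨i, hi, rfl⟩
  rw [hs, hc]
  ring

/-- **Theorem (counting photos over a finite field).**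
Let `F` be a finite field with `q` elements, `d ≥ 2`, `0 < k < d`, and let
`v 0, …, v (n-1)` span `F^r`.  Then the number of `(k,d)`-photos of the matroid
`M` represented by `v` equals
`[d-1 choose k-1]_q^{n-r} · (q^k [d-1 choose k]_q)^r · T_M([d]_q/[d-k]_q, [d]_q/[k]_q)`. -/
theorem photo_count (F : Type*) [Field F] [Fintype F] (r d k n : ℕ)
    (hd : 2 ≤ d) (hk : 0 < k) (hkd : k < d)
    (v : Fin n → (Fin r → F)) (hspan : Submodule.span F (Set.range v) = ⊤) :
    (Nat.card (PhotoSpace F r d k n v) : ℚ) =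
      (gaussBinom (Fintype.card F : ℚ) (d - 1) (k - 1)) ^ (n - r) *
        ((Fintype.card F : ℚ) ^ k * gaussBinom (Fintype.card F : ℚ) (d - 1) k) ^ r *
        tutteEval F v (qInt (Fintype.card F : ℚ) d / qInt (Fintype.card F : ℚ) (d - k))
          (qInt (Fintype.card F : ℚ) d / qInt (Fintype.card F : ℚ) k) := by
  have hq : (1 : ℚ) < Fintype.card F := by exact_mod_cast Fintype.one_lt_card
  obtain ⟨h1, h2, -, h4⟩ := ph_algebra _ hq d k hk hkd
  have hb := (ph_gauss_pos _ hq (d - 1) (k - 1) (by omega)).ne'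
  have hE : repRank F v Set.univ = r := by
    rw [repRank, Set.image_univ, hspan, finrank_top, finrank_fin_fun]
  have hrn : r ≤ n := by
    have := finrank_range_le_card (R := F) v
    rw [Set.finrank, hspan, finrank_top, finrank_fin_fun] at this
    simpa using this
  rw [ph_main F r d k n hk hkd v, tutteEval, Finset.mul_sum, hE, ← h1, ← h2]
  generalize qInt (Fintype.card F : ℚ) d / qInt (Fintype.card F : ℚ) (d - k) - 1 = x at *
  generalize qInt (Fintype.card F : ℚ) d / qInt (Fintype.card F : ℚ) k - 1 = y at *
  generalize gaussBinom (Fintype.card F : ℚ) (d - 1) (k - 1) = b at *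
  refine Finset.sum_congr rfl fun A _ => ?_
  have hA : repRank F v (A : Set (Fin n)) ≤ r := by
    have := Submodule.finrank_le (Submodule.span F (v '' (A : Set (Fin n))))
    rwa [finrank_fin_fun] at this
  have hA' : repRank F v (A : Set (Fin n)) ≤ A.card := by
    classical
    have := finrank_span_finset_le_card (R := F) (A.image v)
    rw [Set.finrank, Finset.coe_image] at this
    exact this.trans Finset.card_image_le
  have hAn : A.card ≤ n := by simpa using Finset.card_le_univ A
  generalize repRank F v (A : Set (Fin n)) = s at *
  obtain ⟨t, rfl⟩ := Nat.exists_eq_add_of_le hA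
  obtain ⟨m, hm⟩ := Nat.exists_eq_add_of_le hA'
  obtain ⟨u, hu⟩ := Nat.exists_eq_add_of_le hrn
  obtain ⟨w, hw⟩ := Nat.exists_eq_add_of_le hAn
  have e1 : n - A.card = w := by omega
  have e2 : n - (s + t) = u := by omega
  have e3 : A.card - s = m := by omega
  have e4 : s + t - s = t := by omega
  rw [e1, e2, e3, e4, hm, mul_pow, mul_pow, mul_pow]
  have e5 : b ^ (s + m) * b ^ w = b ^ u * b ^ (s + t) := by
    rw [← pow_add, ← pow_add]; congr 1; omega
  calc _ = y ^ (s + m) * (b ^ (s + m) * b ^ w) * (x ^ t * y ^ t) := by ring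
    _ = _ := by rw [e5]; ring
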